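/- For every integer d ≥ 3, the fixed point u_d of the morphism φ_d is a rich sequence: every factor of u_d of length n contains exactly n+1 distinct palindromic factors (including the empty word). -/

import Mathlib

namespace RichRT

variable {A : Type*}

/-- The word `w` occurs in the sequence `u` at position `j`. -/
def OccursAt (w : List A) (u : ℕ → A) (j : ℕ) : Prop :=
  w = (List.range w.length).map fun t => u (j + t)

/-- `w` is a factor of the infinite sequence `u`. -/
def IsFactorS (w : List A) (u : ℕ → A) : Prop :=
  ∃ j : ℕ, OccursAt w u j

/-- `u` is recurrent: every factor occurs infinitely often. -/
def Recurrent (u : ℕ → A) : Prop :=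
  ∀ w : List A, IsFactorS w u → ∀ N : ℕ, ∃ j, N ≤ j ∧ OccursAt w u j

/-- The number of distinct palindromic factors of a finite word. -/
noncomputable def palCount (w : List A) : ℕ :=
  Set.ncard {p : List A | p <:+: w ∧ p.reverse = p}

/-- A finite word of length `n` is rich if it has exactly `n+1` palindromic factors. -/
def RichWord (w : List A) : Prop := palCount w = w.length + 1

/-- A sequence is rich if all its factors are rich. -/
def RichSeq (u : ℕ → A) : Prop := ∀ w : List A, IsFactorS w u → RichWord w

/-- The prefix of length `k` of the periodic sequence `vvv⋯`. -/
def powPref (v : List A) (k : ℕ) : List A := ((List.replicate k v).flatten).take k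

/-- The set of exponents `k/|v|` of fractional powers `v^(k/|v|)` occurring in `u`,
with `|v| ≥ n`. -/
def expSet (u : ℕ → A) (n : ℕ) : Set ℝ :=
  {x | ∃ (v : List A) (k : ℕ), v ≠ [] ∧ n ≤ v.length ∧
    IsFactorS (powPref v k) u ∧ x = (k : ℝ) / (v.length : ℝ)}

/-- The critical exponent of a sequence, with values in `EReal`. -/
noncomputable def critExp (u : ℕ → A) : EReal :=
  sSup ((fun x : ℝ => (x : EReal)) '' expSet u 0)

/-- The asymptotic critical exponent of a sequence: `⊤` if the critical exponent is `⊤`,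
otherwise the limit (= infimum, by monotonicity) over `n` of the suprema of exponents of
powers `v^e` with `|v| ≥ n`. -/
noncomputable def acritExp (u : ℕ → A) : EReal :=
  if critExp u = ⊤ then ⊤
  else ⨅ n : ℕ, sSup ((fun x : ℝ => (x : EReal)) '' expSet u n)

/-- The morphism `φ_d` on letters: `i ↦ 0(i+1)` for `i < d-1`, `d-1 ↦ 0(d-1)(d-1)`. -/
def phiL (d : ℕ) (i : ℕ) : List ℕ :=
  if i < d - 1 then [0, i + 1] else [0, d - 1, d - 1]

/-- The morphism `φ_d` on words. -/
def phiW (d : ℕ) (w : List ℕ) : List ℕ := w.flatMap (phiL d)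

/-- `u` is the fixed point of `φ_d`: it begins with `0` and `φ_d(u) = u`, i.e. the image
of every prefix of `u` is again a prefix of `u`. -/
def IsPhiFixed (d : ℕ) (u : ℕ → ℕ) : Prop :=
  u 0 = 0 ∧ ∀ m : ℕ, OccursAt (phiW d ((List.range m).map u)) u 0

/-- Left extensions of `w` in `u`. -/
def Lext (u : ℕ → ℕ) (w : List ℕ) : Set (List ℕ) :=
  {x | ∃ i : ℕ, x = i :: w ∧ IsFactorS x u}

/-- Right extensions of `w` in `u`. -/
def Rext (u : ℕ → ℕ) (w : List ℕ) : Set (List ℕ) :=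
  {x | ∃ i : ℕ, x = w ++ [i] ∧ IsFactorS x u}

/-- Both-sided extensions of `w` in `u`. -/
def Bext (u : ℕ → ℕ) (w : List ℕ) : Set (List ℕ) :=
  {x | ∃ i j : ℕ, x = i :: (w ++ [j]) ∧ IsFactorS x u}

/-- `w` is a bispecial factor of `u`. -/
def Bispecial (u : ℕ → ℕ) (w : List ℕ) : Prop :=
  IsFactorS w u ∧ 2 ≤ (Lext u w).ncard ∧ 2 ≤ (Rext u w).ncard

/-- The bilateral order `b(w) = #Bext(w) − #Lext(w) − #Rext(w) + 1`. -/
noncomputable def bord (u : ℕ → ℕ) (w : List ℕ) : ℤ :=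
  ((Bext u w).ncard : ℤ) - ((Lext u w).ncard : ℤ) - ((Rext u w).ncard : ℤ) + 1

/-- The palindromes `F_0 = ε`, `F_i = φ(F_{i-1})0`. -/
def Fword (d : ℕ) : ℕ → List ℕ
  | 0 => []
  | i + 1 => phiW d (Fword d i) ++ [0]

/-- Membership in the set `𝒯` of bispecial triplets. -/
def TripleMem (d : ℕ) (u : ℕ → ℕ) (t : ℕ × List ℕ × ℕ) : Prop :=
  Bispecial u t.2.1 ∧ t.1 < d - 1 ∧ t.2.2 < d - 1 ∧
    IsFactorS (t.1 :: t.2.1) u ∧ IsFactorS (t.2.1 ++ [t.2.2]) u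

/-- The map `f` on triplets. -/
def fmap (d : ℕ) (t : ℕ × List ℕ × ℕ) : ℕ × List ℕ × ℕ :=
  ((t.1 + 1) % (d - 1),
   (if t.1 = d - 2 then [d - 1] else []) ++ phiW d t.2.1 ++ [0] ++
     (if t.2.2 = d - 2 then [d - 1] else []),
   (t.2.2 + 1) % (d - 1))

/-- The initial triplets `T_k = (0, ε, k)` for `k ≤ d-2` and `T_{d-1} = (0, d-1, 0)`. -/
def Tinit (d k : ℕ) : ℕ × List ℕ × ℕ :=
  if k = d - 1 then (0, [d - 1], 0) else (0, ([] : List ℕ), k)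

/-- The Parikh vector of a word. -/
def parikh (d : ℕ) (w : List ℕ) : Fin d → ℕ := fun i => w.count (i : ℕ)

/-- The incidence matrix of `φ_d`. -/
def Mmat (d : ℕ) : Matrix (Fin d) (Fin d) ℕ := fun i j => (phiL d (j : ℕ)).count (i : ℕ)

/-- `r` is a return word to `w` in `u`. -/
def ReturnWord (u : ℕ → ℕ) (w r : List ℕ) : Prop :=
  ∃ j ℓ : ℕ, j < ℓ ∧ OccursAt w u j ∧ OccursAt w u ℓ ∧
    (∀ m, j < m → m < ℓ → ¬ OccursAt w u m) ∧
    r = (List.range (ℓ - j)).map fun t => u (j + t)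

/-- `R` is a complete return word to `w` in `u`. -/
def CompleteReturn (u : ℕ → ℕ) (w R : List ℕ) : Prop :=
  ∃ r : List ℕ, ReturnWord u w r ∧ R = r ++ w

/-- Palindromes. -/
def Pal (p : List ℕ) : Prop := p.reverse = p

/-- Last letter of the image of a letter. -/
def lst (d c : ℕ) : ℕ := if c < d - 1 then c + 1 else d - 1

/-- Possible extra letter in the image. -/
def ext (d c : ℕ) : List ℕ := if c < d - 1 then [] else [d - 1]

/-- `φ(w)0`. -/
def hW (d : ℕ) (w : List ℕ) : List ℕ := phiW d w ++ [0]

theorem phiL_eq (d c : ℕ) : phiL d c = 0 :: lst d c :: ext d c := by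
  unfold phiL lst ext; split <;> rfl

theorem phiW_cons (d c : ℕ) (w : List ℕ) :
    phiW d (c :: w) = 0 :: lst d c :: (ext d c ++ phiW d w) := by
  simp [phiW, phiL_eq]

theorem phiW_append (d : ℕ) (v w : List ℕ) : phiW d (v ++ w) = phiW d v ++ phiW d w := by
  simp [phiW]

theorem phiW_nil (d : ℕ) : phiW d [] = [] := rfl

theorem hW_cons (d c : ℕ) (w : List ℕ) :
    hW d (c :: w) = 0 :: lst d c :: (ext d c ++ hW d w) := by
  simp [hW, phiW_cons]

theorem hW_nil (d : ℕ) : hW d [] = [0] := rfl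

theorem hW_append (d : ℕ) (v w : List ℕ) : hW d (v ++ w) = phiW d v ++ hW d w := by
  simp [hW, phiW_append]

theorem hW_head (d : ℕ) (w : List ℕ) : ∃ t, hW d w = 0 :: t := by
  cases w with
  | nil => exact ⟨_, rfl⟩
  | cons c w => exact ⟨_, hW_cons d c w⟩

theorem lst_pos (d : ℕ) (hd : 3 ≤ d) (c : ℕ) : lst d c ≠ 0 := by
  unfold lst; split <;> omega

theorem ext_cases (d c : ℕ) :
    (c < d - 1 ∧ ext d c = [] ∧ lst d c = c + 1) ∨
      (¬ c < d - 1 ∧ ext d c = [d - 1] ∧ lst d c = d - 1) := by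
  unfold ext lst; split <;> simp_all

/-- The image of a letter, split off its last letter. -/
theorem phiL_last (d c : ℕ) : ∃ z, phiL d c = z ++ [lst d c] := by
  rw [phiL_eq]
  rcases ext_cases d c with ⟨_, h, h'⟩ | ⟨_, h, h'⟩
  · exact ⟨[0], by simp [h]⟩
  · exact ⟨[0, d - 1], by simp [h, h']⟩

theorem hW_reverse (d : ℕ) (w : List ℕ) : (hW d w).reverse = hW d w.reverse := by
  induction w with
  | nil => rfl
  | cons c w ih =>
    have h1 : hW d (c :: w) = phiL d c ++ hW d w := by rw [hW_cons, phiL_eq]; simp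
    rw [h1, List.reverse_append, ih, List.reverse_cons, hW_append]
    have h2 : hW d [c] = phiL d c ++ [0] := by rw [hW_cons, phiL_eq]; simp [hW_nil]
    rw [h2]
    unfold hW
    rw [List.append_assoc]
    congr 1
    rcases ext_cases d c with ⟨_, h, h'⟩ | ⟨_, h, h'⟩ <;> simp [h, h', phiL_eq]

theorem hW_pal (d : ℕ) (w : List ℕ) (h : Pal w) : Pal (hW d w) := by
  unfold Pal at *; rw [hW_reverse, h]

/-- Decoding at a zero. -/
theorem decode0 (d : ℕ) (hd : 3 ≤ d) (w : List ℕ) : ∀ a b : List ℕ, hW d w = a ++ 0 :: b →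
    ∃ w1 w2, w = w1 ++ w2 ∧ a = phiW d w1 ∧ 0 :: b = hW d w2 := by
  induction w with
  | nil =>
    intro a b h
    refine ⟨[], [], rfl, ?_, ?_⟩
    · cases a with
      | nil => rfl
      | cons x a => simp [hW_nil] at h
    · cases a with
      | nil => simpa using h.symm
      | cons x a => simp [hW_nil] at h
  | cons c w ih =>
    intro a b h
    have hl := lst_pos d hd c
    rw [hW_cons] at h
    match a, h with
    | [], h =>
      exact ⟨[], c :: w, rfl, rfl, by rw [hW_cons]; simpa using h.symm⟩
    | [x], h =>
      simp at h; exact absurd h.2.1 hl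
    | x :: y :: a, h =>
      simp only [List.cons_append, List.cons.injEq] at h
      obtain ⟨rfl, rfl, h⟩ := h
      rcases ext_cases d c with ⟨_, he, _⟩ | ⟨_, he, _⟩
      · rw [he] at h
        obtain ⟨w1, w2, rfl, rfl, h2⟩ := ih a b (by simpa using h)
        exact ⟨c :: w1, w2, rfl, by rw [phiW_cons, he]; simp, h2⟩
      · rw [he] at h
        cases a with
        | nil => simp at h; omega
        | cons x a =>
          simp at h
          obtain ⟨rfl, h⟩ := h
          obtain ⟨w1, w2, rfl, rfl, h2⟩ := ih a b h
          exact ⟨c :: w1, w2, rfl, by rw [phiW_cons, he]; simp, h2⟩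

theorem decodeP (d : ℕ) (hd : 3 ≤ d) (v : List ℕ) : ∀ w b : List ℕ, (∀ c ∈ v, c < d) →
    (∀ c ∈ w, c < d) → hW d w = hW d v ++ b → ∃ w4, w = v ++ w4 ∧ 0 :: b = hW d w4 := by
  induction v with
  | nil => intro w b _ _ h; exact ⟨w, rfl, by simpa [hW_nil] using h.symm⟩
  | cons c v ih =>
    intro w b hv hw h
    cases w with
    | nil => rw [hW_cons] at h; simp [hW_nil] at h
    | cons c' w =>
      rw [hW_cons, hW_cons] at h
      simp only [List.cons_append, List.cons.injEq, true_and, List.append_assoc] at h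
      obtain ⟨h1, h2⟩ := h
      have hc := hv c (by simp)
      have hc' := hw c' (by simp)
      obtain ⟨s, hs⟩ := hW_head d v
      obtain ⟨t, ht⟩ := hW_head d w
      have key : c' = c ∧ hW d w = hW d v ++ b := by
        rcases ext_cases d c with ⟨g, he, hl⟩ | ⟨g, he, hl⟩ <;>
        rcases ext_cases d c' with ⟨g', he', hl'⟩ | ⟨g', he', hl'⟩
        · rw [he, he'] at h2; exact ⟨by omega, by simpa using h2⟩
        · rw [he, he', hs] at h2; simp at h2; omega
        · rw [he, he', ht] at h2; simp at h2; omega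
        · rw [he, he'] at h2; exact ⟨by omega, by simpa using h2⟩
      obtain ⟨rfl, h3⟩ := key
      obtain ⟨w4, rfl, h4⟩ := ih w b (fun x hx => hv x (by simp [hx]))
        (fun x hx => hw x (by simp [hx])) h3
      exact ⟨w4, rfl, h4⟩

/-- Unique palindromic suffix property relative to a class of end letters. -/
def SK (K : ℕ → Prop) (p : List ℕ) : Prop :=
  ∃ w x, p = w ++ [x] ∧ K x ∧ ((∀ c ∈ w, ¬ K c) ∨ ∃ z y v, w = z ++ y :: v ∧ K y ∧ Pal v ∧
    ∀ a y' x' b, K y' → K x' → p = a ++ y' :: (v ++ x' :: b) → b = [])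

/-- `p` has a unioccurrent palindromic suffix. -/
def Ups (p : List ℕ) : Prop :=
  ∃ z q, p = z ++ q ∧ Pal q ∧ ∀ a b, p = a ++ (q ++ b) → b = []

theorem SK_single_of_Ups (w : List ℕ) (x : ℕ) (h : Ups (w ++ [x])) :
    SK (fun c => c = x) (w ++ [x]) := by
  obtain ⟨z, q, h1, h2, h3⟩ := h
  refine ⟨w, x, rfl, rfl, ?_⟩
  rcases List.eq_nil_or_concat' q with rfl | ⟨q', x', rfl⟩
  · have := h3 [] (w ++ [x]) (by simp); simp at this
  · rw [← List.append_assoc] at h1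
    obtain ⟨rfl, hx⟩ := List.append_inj' h1 rfl
    simp at hx
    subst hx
    cases q' with
    | nil =>
      left
      rintro c hc rfl
      obtain ⟨s, t, hst⟩ := List.append_of_mem hc
      have := h3 s (t ++ [c]) (by rw [hst]; simp)
      simp at this
    | cons y v =>
      right
      unfold Pal at h2
      simp at h2
      obtain ⟨rfl, h2⟩ := h2
      have h2' : v.reverse = v := by simpa using h2
      refine ⟨z, x, v, rfl, rfl, h2', ?_⟩
      rintro a y' x' b rfl rfl h
      exact h3 a b (by rw [h]; simp)

theorem Ups_of_SK_single (p : List ℕ) (x : ℕ) (h : SK (fun c => c = x) p) : Ups p := by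
  obtain ⟨w, x', rfl, rfl, h⟩ := h
  rcases h with h | ⟨z, y, v, rfl, rfl, h1, h2⟩
  · refine ⟨w, [x'], rfl, rfl, ?_⟩
    intro a b hab
    rcases List.eq_nil_or_concat' b with rfl | ⟨b', y, rfl⟩
    · rfl
    · exfalso
      rw [← List.append_assoc, ← List.append_assoc] at hab
      obtain ⟨rfl, _⟩ := List.append_inj' hab rfl
      exact h x' (by simp) rfl
  · refine ⟨z, y :: (v ++ [y]), by simp, ?_, ?_⟩
    · unfold Pal at *; simp [h1]
    · intro a b hab
      exact h2 a y y b rfl rfl (by rw [hab]; simp)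

/-- Case (i). -/
theorem ups_image (d : ℕ) (hd : 3 ≤ d) (w : List ℕ) (hw : ∀ c ∈ w, c < d) (h : Ups w) :
    Ups (hW d w) := by
  obtain ⟨z, q, rfl, h2, h3⟩ := h
  refine ⟨phiW d z, hW d q, hW_append _ _ _, hW_pal _ _ h2, ?_⟩
  intro a b hab
  obtain ⟨s, hs⟩ := hW_head d q
  obtain ⟨w1, w2, e1, rfl, e3⟩ := decode0 d hd _ a (s ++ b) (by rw [hab, hs]; simp)
  have e3' : hW d w2 = hW d q ++ b := by rw [← e3, hs]; simp
  obtain ⟨w4, rfl, e5⟩ := decodeP d hd q w2 b (fun c hc => hw c (by simp [hc]))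
    (fun c hc => hw c (by rw [e1]; simp [hc])) e3'
  have := h3 w1 w4 e1
  subst this
  simpa [hW_nil] using e5

theorem not_mem_phi (d : ℕ) (K : ℕ → Prop) (h0 : ¬ K 0) (w : List ℕ)
    (h : ∀ c ∈ w, ¬ K (lst d c)) : ∀ c ∈ hW d w, ¬ K c := by
  induction w with
  | nil => simpa [hW_nil] using h0
  | cons c w ih =>
    rw [hW_cons]
    intro x hx
    have hc := h c (by simp)
    simp only [List.mem_cons, List.mem_append] at hx
    rcases hx with rfl | rfl | hx | hx
    · exact h0
    · exact hc
    · rcases ext_cases d c with ⟨_, h, h'⟩ | ⟨_, h, h'⟩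
      · simp [h] at hx
      · simp [h] at hx; rw [hx, ← h']; exact hc
    · exact ih (fun y hy => h y (by simp [hy])) x hx

/-- Case (ii). -/
theorem SK_image (d : ℕ) (hd : 3 ≤ d) (K : ℕ → Prop) (h0 : ¬ K 0) (w : List ℕ) (X : ℕ)
    (hw : ∀ c ∈ w ++ [X], c < d) (h : SK (fun c => K (lst d c)) (w ++ [X])) :
    SK K (hW d w ++ [lst d X]) := by
  obtain ⟨w', X', e, hX, h⟩ := h
  obtain ⟨rfl, hx⟩ := List.append_inj' e rfl
  simp at hx
  subst hx
  refine ⟨hW d w, lst d X, rfl, hX, ?_⟩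
  rcases h with h | ⟨z, Y, v, rfl, hY, hv, h⟩
  · left; exact not_mem_phi d K h0 w h
  · right
    obtain ⟨r, hr⟩ := phiL_last d Y
    refine ⟨phiW d z ++ r, lst d Y, hW d v, ?_, hY, hW_pal _ _ hv, ?_⟩
    · have : z ++ Y :: v = z ++ ([Y] ++ v) := by simp
      rw [this, hW_append, hW_append]
      have : phiW d [Y] = phiL d Y := by simp [phiW]
      rw [this, hr]; simp
    · intro a y' x' b hy' hx' hab
      have hfull : hW d (z ++ Y :: v ++ [X]) =
          (a ++ [y']) ++ (hW d v ++ (x' :: (b ++ (ext d X ++ [0])))) := by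
        have : hW d (z ++ Y :: v ++ [X]) =
            (hW d (z ++ Y :: v) ++ [lst d X]) ++ (ext d X ++ [0]) := by
          rw [hW_append, hW_cons, hW_nil]; simp [hW]
        rw [this, hab]; simp
      obtain ⟨s, hs⟩ := hW_head d v
      obtain ⟨w1, w2, e1, e2, e3⟩ := decode0 d hd _ _ _ (by rw [hfull, hs]; rfl)
      have e3' : hW d w2 = hW d v ++ (x' :: (b ++ (ext d X ++ [0]))) := by
        rw [← e3, hs]; rfl
      obtain ⟨w4, rfl, e5⟩ := decodeP d hd v w2 _ (fun c hc => hw c (by simp [hc]))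
        (fun c hc => hw c (by rw [e1]; simp [hc])) e3'
      rcases List.eq_nil_or_concat' w1 with rfl | ⟨w1', Y', rfl⟩
      · simp [phiW_nil] at e2
      obtain ⟨r', hr'⟩ := phiL_last d Y'
      have e2' : a ++ [y'] = (phiW d w1' ++ r') ++ [lst d Y'] := by
        rw [e2, phiW_append]; simp [phiW, hr']
      obtain ⟨-, hyy⟩ := List.append_inj' e2' rfl
      simp at hyy
      cases w4 with
      | nil => simp [hW_nil] at e5
      | cons X' w5 =>
        rw [hW_cons] at e5
        simp only [List.cons.injEq, true_and] at e5
        obtain ⟨e6, e7⟩ := e5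
        have := h w1' Y' X' w5 (hyy ▸ hy' : K (lst d Y')) (e6 ▸ hx' : K (lst d X'))
          (by rw [e1]; simp)
        subst this
        have e8 : z ++ Y :: v ++ [X] = (w1' ++ [Y'] ++ v) ++ [X'] := by rw [e1]; simp
        obtain ⟨-, hXX⟩ := List.append_inj' e8 rfl
        simp at hXX
        subst hXX
        rw [hW_nil] at e7
        simpa using e7

/-- Decoding of two adjacent nonzero letters. -/
theorem decode2 (d : ℕ) (hd : 3 ≤ d) (w : List ℕ) : ∀ (a b : List ℕ) (y x : ℕ), y ≠ 0 → x ≠ 0 →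
    hW d w = a ++ y :: x :: b →
    ∃ w1 D w2, w = w1 ++ D :: w2 ∧ ¬ D < d - 1 ∧ b = hW d w2 := by
  induction w with
  | nil =>
    intro a b y x hy hx h
    have := congrArg List.length h
    simp [hW_nil] at this
    omega
  | cons c w ih =>
    intro a b y x hy hx h
    rw [hW_cons] at h
    obtain ⟨s, hs⟩ := hW_head d w
    match a, h with
    | [], h => simp at h; exact absurd h.1.symm hy
    | [a1], h =>
      simp only [List.cons_append, List.cons.injEq, List.nil_append] at h
      obtain ⟨-, -, h⟩ := h
      rcases ext_cases d c with ⟨_, he, _⟩ | ⟨hc, he, _⟩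
      · rw [he, hs] at h; simp at h; exact absurd h.1.symm hx
      · rw [he] at h; simp at h
        exact ⟨[], c, w, rfl, hc, h.2.symm⟩
    | a1 :: a2 :: a, h =>
      simp only [List.cons_append, List.cons.injEq] at h
      obtain ⟨-, -, h⟩ := h
      rcases ext_cases d c with ⟨_, he, _⟩ | ⟨hc, he, _⟩
      · rw [he] at h
        obtain ⟨w1, D, w2, rfl, h1, h2⟩ := ih a b y x hy hx (by simpa using h)
        exact ⟨c :: w1, D, w2, rfl, h1, h2⟩
      · rw [he] at h
        cases a with
        | nil => rw [hs] at h; simp at h; exact absurd h.2.1.symm hx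
        | cons a3 a =>
          obtain ⟨w1, D, w2, rfl, h1, h2⟩ := ih a b y x hy hx (by simp at h; exact h.2)
          exact ⟨c :: w1, D, w2, rfl, h1, h2⟩

/-- Case (iii). -/
theorem SK_image2 (d : ℕ) (hd : 3 ≤ d) (K : ℕ → Prop) (h0 : ¬ K 0) (hK : K (d - 1))
    (w : List ℕ)
    (hw : ∀ c ∈ w ++ [d - 1], c < d) (h : SK (fun c => c = d - 1) (w ++ [d - 1])) :
    SK K (hW d w ++ [d - 1, d - 1]) := by
  obtain ⟨w', X', e, hX, h⟩ := h
  obtain ⟨rfl, hx⟩ := List.append_inj' e rfl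
  have hlt : ext d (d - 1) = [d - 1] ∧ lst d (d - 1) = d - 1 := by
    simp [ext, lst]
  have hfull : hW d (w ++ [d - 1]) = (hW d w ++ [d - 1, d - 1]) ++ [0] := by
    rw [hW_append, hW_cons, hW_nil, hlt.1, hlt.2]; simp [hW]
  have hne : ∀ y, K y → y ≠ 0 := by rintro y hy rfl; exact h0 hy
  refine ⟨hW d w ++ [d - 1], d - 1, by simp, hK, Or.inr ?_⟩
  rcases h with h | ⟨z, Y, v, rfl, hY, hv, h⟩
  · refine ⟨hW d w, d - 1, [], rfl, hK, rfl, ?_⟩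
    intro a y x b hy hx' hab
    obtain ⟨w1, D, w2, e1, e2, e3⟩ := decode2 d hd (w ++ [d - 1]) a (b ++ [0]) y x
      (hne y hy) (hne x hx') (by rw [hfull, hab]; simp)
    have hD := hw D (by rw [e1]; simp)
    rcases List.eq_nil_or_concat' w2 with rfl | ⟨w2', t, rfl⟩
    · simpa [hW_nil] using e3
    · exfalso
      have e1' : w ++ [d - 1] = (w1 ++ D :: w2') ++ [t] := by rw [e1]; simp
      obtain ⟨rfl, -⟩ := List.append_inj' e1' rfl
      exact h D (by simp) (by omega)
  · have hY' : Y = d - 1 := hY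
    subst hY'
    refine ⟨phiW d z ++ [0], d - 1, (d - 1) :: (hW d v ++ [d - 1]), ?_, hK, ?_, ?_⟩
    · rw [hW_append, hW_cons, hlt.1, hlt.2]; simp
    · have := hW_pal d v hv
      unfold Pal at *; simp [this]
    · intro a y x b hy hx' hab
      obtain ⟨w1, D, w2, e1, e2, e3⟩ := decode2 d hd (z ++ (d - 1) :: v ++ [d - 1]) a
        (hW d v ++ (d - 1) :: x :: (b ++ [0])) y (d - 1)
        (hne y hy) (by omega) (by rw [hfull, hab]; simp)
      have hD := hw D (by rw [e1]; simp)
      have hD' : D = d - 1 := by omega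
      subst hD'
      obtain ⟨w4, rfl, e5⟩ := decodeP d hd v w2 _ (fun c hc => hw c (by simp [hc]))
        (fun c hc => hw c (by rw [e1]; simp [hc])) e3.symm
      cases w4 with
      | nil => simp [hW_nil] at e5
      | cons X w5 =>
        have hXd := hw X (by rw [e1]; simp)
        rw [hW_cons] at e5
        simp only [List.cons.injEq, true_and] at e5
        obtain ⟨e6, e7⟩ := e5
        obtain ⟨s, hs⟩ := hW_head d w5
        rcases ext_cases d X with ⟨_, he, _⟩ | ⟨hc, he, _⟩
        · rw [he, hs] at e7; simp at e7; exact absurd e7.1 (hne x hx')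
        · rw [he] at e7
          simp at e7
          have := h w1 (d - 1) X w5 rfl (by show X = d - 1; omega) (by rw [e1])
          subst this
          simpa [hW_nil] using e7.2

theorem exists_min {α : Type*} (f : α → ℕ) (P : α → Prop) (h : ∃ a, P a) :
    ∃ a, P a ∧ ∀ b, P b → f a ≤ f b := by
  classical
  have hex : ∃ n, ∃ a, P a ∧ f a = n := by obtain ⟨a, ha⟩ := h; exact ⟨_, a, ha, rfl⟩
  obtain ⟨a, ha, hn⟩ := Nat.find_spec hex
  exact ⟨a, ha, fun b hb => by rw [hn]; exact Nat.find_min' hex ⟨b, hb, rfl⟩⟩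

/-- Statement for the class of all letters. -/
theorem SK_all (K : ℕ → Prop) (hK : ∀ c, K c) (w : List ℕ) (x : ℕ)
    (h : ∀ p, p <+: w → Ups p) : SK K (w ++ [x]) := by
  refine ⟨w, x, rfl, hK x, ?_⟩
  by_cases hw : w = []
  · left; simp [hw]
  right
  have main : ∃ z v, z ≠ [] ∧ w = z ++ v ∧ Pal v ∧
      ∀ a y' r, r ≠ [] → w = a ++ y' :: (v ++ r) → False := by
    obtain ⟨z, q, e, hq, hu⟩ := h w (List.prefix_refl w)
    by_cases hz : z = []
    · subst hz
      simp at e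
      subst e
      obtain ⟨z, ⟨hz, v, e, hv⟩, hmin⟩ := exists_min List.length
        (fun z : List ℕ => z ≠ [] ∧ ∃ v, w = z ++ v ∧ Pal v) ⟨w, hw, [], by simp, rfl⟩
      refine ⟨z, v, hz, e, hv, ?_⟩
      intro a
      induction hn : a.length using Nat.strong_induction_on generalizing a with
      | _ n ih =>
      intro y' r hr hwr
      have hwv : w = v ++ z.reverse := by
        have : w.reverse = w := hq
        rw [← this, e, List.reverse_append, hv]
      obtain ⟨z1, q', e1, hq', hu'⟩ := h (a ++ y' :: v) ⟨r, by rw [hwr]; simp⟩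
      have hlen : v.length < q'.length := by
        by_contra hcon
        have hs : q' <:+ v := by
          apply List.suffix_of_suffix_length_le (l₃ := a ++ y' :: v) ⟨z1, e1.symm⟩
            ⟨a ++ [y'], by simp⟩ (by omega)
        obtain ⟨s, hs⟩ := hs
        have hp : v <+: a ++ y' :: v := by
          apply List.prefix_of_prefix_length_le (l₃ := w) ⟨z.reverse, hwv.symm⟩
            ⟨r, by rw [hwr]; simp⟩ (by simp; omega)
        obtain ⟨t, ht⟩ := hp
        have := hu' s t (by rw [← ht, ← hs]; simp)
        subst this
        have := congrArg List.length ht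
        simp at this
        omega
      have hs : v <:+ q' := by
        apply List.suffix_of_suffix_length_le (l₃ := a ++ y' :: v) ⟨a ++ [y'], by simp⟩
          ⟨z1, e1.symm⟩ (by omega)
      obtain ⟨s, rfl⟩ := hs
      have hq2 : s ++ v = v ++ s.reverse := by
        have h1 : (s ++ v).reverse = s ++ v := hq'
        rw [List.reverse_append, hv] at h1
        exact h1.symm
      have hsl : 0 < s.length := by simp at hlen; omega
      have l1 := congrArg List.length e1
      have l2 := congrArg List.length e
      have l3 := congrArg List.length hwr
      simp at l1 l2 l3
      rcases List.eq_nil_or_concat' z1 with rfl | ⟨z1', y2, rfl⟩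
      · have hw2 : w = r.reverse ++ (s ++ v) := by
          have h1 : w.reverse = w := hq
          have h2 : (s ++ v).reverse = s ++ v := hq'
          have h3 : w = (s ++ v) ++ r := by
            rw [hwr]
            have : a ++ y' :: (v ++ r) = (a ++ y' :: v) ++ r := by simp
            rw [this, e1]; simp
          rw [← h1, h3, List.reverse_append, h2]
        have := hmin r.reverse ⟨by simpa using hr, _, hw2, hq'⟩
        simp at this l1
        omega
      · simp at l1
        refine ih z1'.length (by omega) z1' rfl y2 (s.reverse ++ r) (by simp [hr]) ?_
        rw [hwr]
        have : a ++ y' :: (v ++ r) = (a ++ y' :: v) ++ r := by simp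
        rw [this, e1, hq2]; simp
    · refine ⟨z, q, hz, e, hq, ?_⟩
      intro a y' r hr hwr
      exact hr (hu (a ++ [y']) r (by rw [hwr]; simp))
  obtain ⟨z, v, hz, e, hv, hm⟩ := main
  rcases List.eq_nil_or_concat' z with rfl | ⟨z', y, rfl⟩
  · exact absurd rfl hz
  refine ⟨z', y, v, by rw [e]; simp, hK y, hv, ?_⟩
  intro a y' x' b _ _ hab
  rcases List.eq_nil_or_concat' b with rfl | ⟨b', t, rfl⟩
  · rfl
  · exfalso
    have h1 : w ++ [x] = (a ++ y' :: (v ++ x' :: b')) ++ [t] := by rw [hab]; simp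
    obtain ⟨h2, -⟩ := List.append_inj' h1 rfl
    exact hm a y' (x' :: b') (by simp) h2

theorem pref_cases (d : ℕ) (w : List ℕ) : ∀ p, p <+: phiW d w → p ≠ [] →
    ∃ w1 X w2, w = w1 ++ X :: w2 ∧ (p = hW d w1 ∨ p = hW d w1 ++ [lst d X] ∨
      (¬ X < d - 1 ∧ p = hW d w1 ++ [d - 1, d - 1])) := by
  induction w with
  | nil => intro p hp hne; simp [phiW_nil] at hp; exact absurd hp hne
  | cons c w ih =>
    intro p hp hne
    rw [phiW_cons] at hp
    have step : ∀ p', p' <+: phiW d w → p' ≠ [] → p = 0 :: lst d c :: (ext d c ++ p') →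
        ∃ w1 X w2, c :: w = w1 ++ X :: w2 ∧ (p = hW d w1 ∨ p = hW d w1 ++ [lst d X] ∨
          (¬ X < d - 1 ∧ p = hW d w1 ++ [d - 1, d - 1])) := by
      intro p' h1 h2 h3
      obtain ⟨w1, X, w2, rfl, h4⟩ := ih p' h1 h2
      refine ⟨c :: w1, X, w2, rfl, ?_⟩
      rw [h3, hW_cons]
      rcases h4 with rfl | rfl | ⟨h5, rfl⟩
      · left; rfl
      · right; left; simp
      · right; right; exact ⟨h5, by simp⟩
    match p, hp, hne with
    | [], _, hne => exact absurd rfl hne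
    | [a], hp, _ =>
      simp at hp; subst hp
      exact ⟨[], c, w, rfl, Or.inl rfl⟩
    | [a, b], hp, _ =>
      simp [List.cons_prefix_cons] at hp
      obtain ⟨rfl, rfl⟩ := hp
      exact ⟨[], c, w, rfl, Or.inr (Or.inl rfl)⟩
    | a :: b :: e :: p, hp, _ =>
      rw [List.cons_prefix_cons, List.cons_prefix_cons] at hp
      obtain ⟨rfl, rfl, hp⟩ := hp
      rcases ext_cases d c with ⟨_, he, hl⟩ | ⟨hc, he, hl⟩
      · rw [he] at hp
        exact step (e :: p) (by simpa using hp) (by simp) (by rw [he]; simp)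
      · rw [he, List.cons_append, List.cons_prefix_cons] at hp
        obtain ⟨rfl, hp⟩ := hp
        by_cases hpn : p = []
        · subst hpn
          exact ⟨[], c, w, rfl, Or.inr (Or.inr ⟨hc, by rw [hl]; rfl⟩)⟩
        · exact step p (by simpa using hp) hpn (by rw [he]; simp)

theorem phiW_len (d : ℕ) (w : List ℕ) : 2 * w.length ≤ (phiW d w).length := by
  induction w with
  | nil => simp
  | cons c w ih => rw [phiW_cons]; simp; omega

/-- The invariant of the induction. -/
def Good (p : List ℕ) : Prop :=
  Ups p ∧ ∀ w x k, p = w ++ [x] → k ≤ x → SK (fun c => k ≤ c) p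

theorem good_all (d : ℕ) (hd : 3 ≤ d) (Pf : List ℕ → Prop)
    (hA : ∀ p q, p <+: q → Pf q → Pf p) (hB : ∀ p, Pf p → ∀ c ∈ p, c < d)
    (hC : ∀ p, Pf p → ∃ w, Pf w ∧ p <+: phiW d w) :
    ∀ n p, p.length = n → Pf p → Good p := by
  intro n
  induction n using Nat.strong_induction_on with
  | _ n ih =>
  intro p hn hp
  by_cases hne : p = []
  · subst hne
    exact ⟨⟨[], [], rfl, rfl, fun a b h => by simp at h; exact h.2⟩,
      fun w x k h => by simp at h⟩
  have hzero : ∀ w x, p = w ++ [x] → SK (fun c => 0 ≤ c) p := by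
    rintro w x rfl
    refine SK_all _ (fun c => Nat.zero_le c) w x (fun q hq => ?_)
    have hl := hq.length_le
    simp at hn
    exact (ih q.length (by omega) q rfl (hA _ _ (hq.trans (List.prefix_append _ _)) hp)).1
  suffices hmain : Ups p ∧ ∀ w x k, p = w ++ [x] → 1 ≤ k → k ≤ x → SK (fun c => k ≤ c) p by
    refine ⟨hmain.1, fun w x k h hk => ?_⟩
    rcases Nat.eq_zero_or_pos k with rfl | hk0
    · exact hzero w x h
    · exact hmain.2 w x k h hk0 hk
  obtain ⟨W, hW1, hW2⟩ := hC p hp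
  obtain ⟨w1, X, w2, hWe, hcase⟩ := pref_cases d W p hW2 hne
  have hPX : Pf (w1 ++ [X]) := hA _ W ⟨w2, by rw [hWe]; simp⟩ hW1
  have hP1 : Pf w1 := hA _ _ (List.prefix_append _ _) hPX
  have hlen := phiW_len d w1
  have hXd := hB _ hPX X (by simp)
  rcases hcase with rfl | rfl | ⟨hX, rfl⟩
  · simp [hW] at hn
    refine ⟨ups_image d hd w1 (hB _ hP1) (ih w1.length (by omega) w1 rfl hP1).1, ?_⟩
    intro w x k h hk hkx
    obtain ⟨-, h2⟩ := List.append_inj' h rfl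
    simp at h2
    omega
  · simp [hW] at hn
    have hg := ih (w1 ++ [X]).length (by simp; omega) _ rfl hPX
    constructor
    · apply Ups_of_SK_single _ (lst d X)
      apply SK_image d hd _ (fun h => lst_pos d hd X h.symm) w1 X (hB _ hPX)
      by_cases hXX : X + 1 < d - 1
      · have := SK_single_of_Ups _ _ hg.1
        convert this using 2 with c
        unfold lst
        split <;> split <;> omega
      · have := hg.2 w1 X (d - 2) rfl (by omega)
        convert this using 2 with c
        unfold lst
        split <;> split <;> omega
    · intro w x k h hk hkx
      obtain ⟨-, h2⟩ := List.append_inj' h rfl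
      simp at h2
      subst h2
      apply SK_image d hd _ (by omega) w1 X (hB _ hPX)
      have hk2 : k ≤ d - 1 ∧ k ≤ X + 1 := by
        unfold lst at hkx; split at hkx <;> omega
      have := hg.2 w1 X (k - 1) rfl (by omega)
      convert this using 2 with c
      unfold lst
      split <;> omega
  · simp [hW] at hn
    have hXe : X = d - 1 := by omega
    subst hXe
    have hg := ih (w1 ++ [d - 1]).length (by simp; omega) _ rfl hPX
    have hs := SK_single_of_Ups _ _ hg.1
    constructor
    · apply Ups_of_SK_single _ (d - 1)
      exact SK_image2 d hd (fun c => c = d - 1) (by omega) rfl w1 (hB _ hPX) hs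
    · intro w x k h hk hkx
      have h' : (hW d w1 ++ [d - 1]) ++ [d - 1] = w ++ [x] := by rw [← h]; simp
      obtain ⟨-, h2⟩ := List.append_inj' h' rfl
      simp at h2
      subst h2
      exact SK_image2 d hd _ (by omega) hkx w1 (hB _ hPX) hs

/-- Set of palindromic factors. -/
def palSet (w : List ℕ) : Set (List ℕ) := {p : List ℕ | p <:+: w ∧ p.reverse = p}

theorem palSet_finite (w : List ℕ) : (palSet w).Finite := by
  apply Set.Finite.subset (List.finite_toSet w.sublists)
  rintro p ⟨hp, -⟩
  simpa using hp.sublist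

theorem palSet_mono (w : List ℕ) (x : ℕ) : palSet w ⊆ palSet (w ++ [x]) := by
  rintro p ⟨h1, h2⟩
  exact ⟨h1.trans ⟨[], [x], by simp⟩, h2⟩

theorem infix_snoc {p w : List ℕ} {x : ℕ} (h : p <:+: w ++ [x]) :
    p <:+: w ∨ p <:+ w ++ [x] := by
  obtain ⟨s, t, h⟩ := h
  rcases List.eq_nil_or_concat' t with rfl | ⟨t', y, rfl⟩
  · right; exact ⟨s, by simpa using h⟩
  · left
    rw [← List.append_assoc] at h
    obtain ⟨h2, -⟩ := List.append_inj' h rfl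
    exact ⟨s, t', h2⟩

theorem palCount_le_snoc (w : List ℕ) (x : ℕ) : palCount (w ++ [x]) ≤ palCount w + 1 := by
  show (palSet (w ++ [x])).ncard ≤ (palSet w).ncard + 1
  have hsub : ∀ p q, p ∈ palSet (w ++ [x]) → q ∈ palSet (w ++ [x]) → p ∉ palSet w →
      q ∉ palSet w → p.length ≤ q.length → p = q := by
    rintro p q ⟨hp1, hp2⟩ ⟨hq1, hq2⟩ hp hq hle
    have hps : p <:+ w ++ [x] := (infix_snoc hp1).resolve_left fun h => hp ⟨h, hp2⟩
    have hqs : q <:+ w ++ [x] := (infix_snoc hq1).resolve_left fun h => hq ⟨h, hq2⟩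
    obtain ⟨s, hs⟩ := List.suffix_of_suffix_length_le hps hqs hle
    have hpre : q = p ++ s.reverse := by
      rw [← hq2, ← hs, List.reverse_append, hp2]
    rcases List.eq_nil_or_concat' s.reverse with h | ⟨s', y, h⟩
    · rw [hpre, h]; simp
    · exfalso
      apply hp
      refine ⟨?_, hp2⟩
      obtain ⟨z, hz⟩ := hqs
      have : (z ++ p ++ s') ++ [y] = w ++ [x] := by rw [← hz, hpre, h]; simp
      obtain ⟨h3, -⟩ := List.append_inj' this rfl
      exact ⟨z, s', h3⟩
  have hone : (palSet (w ++ [x]) \ palSet w).ncard ≤ 1 := by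
    rw [Set.ncard_le_one ((palSet_finite _).subset Set.sdiff_subset)]
    rintro p ⟨hp, hp'⟩ q ⟨hq, hq'⟩
    rcases le_total p.length q.length with h | h
    · exact hsub p q hp hq hp' hq' h
    · exact (hsub q p hq hp hq' hp' h).symm
  have := Set.ncard_sdiff_add_ncard_of_subset (palSet_mono w x) (palSet_finite _)
  omega

theorem palCount_snoc (w : List ℕ) (x : ℕ) (h : Ups (w ++ [x])) :
    palCount w + 1 ≤ palCount (w ++ [x]) := by
  show (palSet w).ncard + 1 ≤ (palSet (w ++ [x])).ncard
  obtain ⟨z, q, e, hq, hu⟩ := h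
  have hn : q ∉ palSet w := by
    rintro ⟨⟨s, t, h⟩, -⟩
    have := hu s (t ++ [x]) (by rw [← h]; simp)
    simp at this
  rw [← Set.ncard_insert_of_notMem hn (palSet_finite _)]
  apply Set.ncard_le_ncard _ (palSet_finite _)
  apply Set.insert_subset _ (palSet_mono w x)
  exact ⟨⟨z, [], by simp [e]⟩, hq⟩

theorem palCount_reverse (w : List ℕ) : palCount w.reverse = palCount w := by
  unfold palCount
  congr 1
  ext p
  constructor
  · rintro ⟨h1, h2⟩
    refine ⟨?_, h2⟩
    rw [← h2] at h1
    exact List.reverse_infix.1 h1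
  · rintro ⟨h1, h2⟩
    refine ⟨?_, h2⟩
    rw [← h2]
    exact List.reverse_infix.2 h1

theorem palCount_nil : palCount ([] : List ℕ) = 1 := by
  have : {p : List ℕ | p <:+: [] ∧ p.reverse = p} = {[]} := by
    ext p; simp; rintro rfl; rfl
  unfold palCount
  rw [this]; simp

theorem palCount_le (w : List ℕ) : palCount w ≤ w.length + 1 := by
  induction w using List.reverseRecOn with
  | nil => simp [palCount_nil]
  | append_singleton w x ih => have := palCount_le_snoc w x; simp; omega

theorem palCount_append (a w : List ℕ) : palCount (a ++ w) ≤ a.length + palCount w := by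
  induction a with
  | nil => simp
  | cons c a ih =>
    have := palCount_le_snoc (a ++ w).reverse c
    rw [← List.reverse_cons, palCount_reverse, palCount_reverse] at this
    simp at *
    omega

theorem palCount_ge (w : List ℕ) (h : ∀ p, p <+: w → Ups p) : w.length + 1 ≤ palCount w := by
  induction w using List.reverseRecOn with
  | nil => simp [palCount_nil]
  | append_singleton w x ih =>
    have := palCount_snoc w x (h _ (List.prefix_refl _))
    have := ih (fun p hp => h p (hp.trans (List.prefix_append _ _)))
    simp; omega

theorem pre_prefix (u : ℕ → ℕ) (m n : ℕ) (h : m ≤ n) :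
    (List.range m).map u <+: (List.range n).map u := by
  obtain ⟨k, rfl⟩ := Nat.exists_eq_add_of_le h
  rw [List.range_add, List.map_append]
  exact List.prefix_append _ _

theorem phi_letters (d : ℕ) (hd : 3 ≤ d) (w : List ℕ) : ∀ c ∈ phiW d w, c < d := by
  intro c hc
  simp only [phiW, List.mem_flatMap] at hc
  obtain ⟨i, _, hc⟩ := hc
  unfold phiL at hc
  split at hc <;> simp at hc <;> omega

/-- For `d ≥ 3`, the fixed point `u_d` of `φ_d` is rich: every factor of
length `n` contains exactly `n+1` distinct palindromic factors. -/
theorem statement1 (d : ℕ) (hd : 3 ≤ d) (u : ℕ → ℕ) (hu : IsPhiFixed d u) :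
    ∀ w : List ℕ, IsFactorS w u → palCount w = w.length + 1 := by
  have hpre : ∀ n, (List.range n).map u <+: phiW d ((List.range n).map u) := by
    intro n
    have h := hu.2 n
    unfold OccursAt at h
    simp only [Nat.zero_add] at h
    rw [h]
    apply pre_prefix
    have := phiW_len d ((List.range n).map u)
    simp at this
    omega
  have hgood := good_all d hd (fun p => ∃ n, p = (List.range n).map u)
    (by
      rintro p q hpq ⟨n, rfl⟩
      refine ⟨p.length, ?_⟩
      have hl := hpq.length_le
      simp at hl
      exact (List.prefix_of_prefix_length_le hpq (pre_prefix u p.length n hl) (by simp)).eq_of_length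
        (by simp))
    (by
      rintro p ⟨n, rfl⟩ c hc
      exact phi_letters d hd _ c ((hpre n).subset hc))
    (by
      rintro p ⟨n, rfl⟩
      exact ⟨_, ⟨n, rfl⟩, hpre n⟩)
  rintro w ⟨j, hj⟩
  have hrich := palCount_ge ((List.range (j + w.length)).map u) (by
    intro p hp
    refine (hgood p.length p rfl ⟨p.length, ?_⟩).1
    have hl := hp.length_le
    simp at hl
    exact (List.prefix_of_prefix_length_le hp (pre_prefix u p.length _ hl) (by simp)).eq_of_length
      (by simp))
  have hsplit : (List.range (j + w.length)).map u = (List.range j).map u ++ w := by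
    rw [List.range_add, List.map_append, List.map_map]
    congr 1
    exact hj.symm
  rw [hsplit] at hrich
  have h1 := palCount_append ((List.range j).map u) w
  have h2 := palCount_le w
  simp at hrich h1
  omega
end RichRT
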